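/- arXiv:quant-ph/0407217 — 6 statements merged into one kernel-verified Lean document; each statement's English description precedes it below -/
import Mathlib

section
/- The set V₀ has exactly C(N, k−1) · k! elements, where C(N, k−1) is the binomial coefficient and k! is the factorial of k. -/
/-!
For a fixed omitted index `j`, a function in the set is determined by the addresses of the
remaining items, which form an arbitrary embedding of `{i // i ≠ j}` into the addresses: there
are `N (N - 1) ⋯ (N - k + 2) = C(N, k - 1) (k - 1)!` of these. A function omits only one item,
so the `k` choices of `j` give disjoint families, and `k (k - 1)! = k!`.
-/

open Function

section Placements

variable {ι α B : Type*} [Zero B] {y : ι → B}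

/-- The databases with address set `α` that hold each item `y i` at exactly one address and `0`
at every address that holds no item. -/
def placements (α : Type*) (y : ι → B) : Set (α → B) :=
  {f | (∀ i, ∃! x, f x = y i) ∧ ∀ x, (∀ i, f x ≠ y i) → f x = 0}

lemma extend_zero_eq_iff (hy : Injective y) (e : ι ↪ α) {i : ι} (hi0 : y i ≠ 0) {x : α} :
    extend e y 0 x = y i ↔ e i = x := by
  constructor
  · intro h
    by_cases hx : ∃ i', e i' = x
    · obtain ⟨i', rfl⟩ := hx
      rw [e.injective.extend_apply] at h
      rw [hy h]
    · rw [extend_apply' _ _ _ hx] at h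
      exact absurd h.symm hi0
  · rintro rfl
    exact e.injective.extend_apply y 0 i

lemma embedding_extend_zero_injective (hy : Injective y) (hy0 : ∀ i, y i ≠ 0) :
    Injective fun e : ι ↪ α => extend e y 0 := by
  intro e e' h
  ext i
  have happly : extend e y 0 (e' i) = extend e' y 0 (e' i) := congrFun h (e' i)
  rw [← extend_zero_eq_iff hy e (hy0 i), happly, extend_zero_eq_iff hy e' (hy0 i)]

lemma extend_zero_mem_placements (hy : Injective y) (hy0 : ∀ i, y i ≠ 0) (e : ι ↪ α) :
    extend e y 0 ∈ placements α y := by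
  refine ⟨fun i => ?_, fun x hx => ?_⟩
  · simp only [extend_zero_eq_iff hy e (hy0 i), existsUnique_eq']
  · refine extend_apply' _ _ _ ?_
    rintro ⟨i, hi⟩
    exact hx i ((extend_zero_eq_iff hy e (hy0 i)).2 hi)

lemma exists_extend_zero_eq_of_mem_placements (hy : Injective y) {f : α → B}
    (hf : f ∈ placements α y) : ∃ e : ι ↪ α, extend e y 0 = f := by
  obtain ⟨hunique, hzero⟩ := hf
  choose address haddress haddress_unique using hunique
  have address_injective : Injective address := fun i i' h =>
    hy (by rw [← haddress i, h]; exact haddress i')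
  refine ⟨⟨address, address_injective⟩, funext fun x => ?_⟩
  by_cases hx : ∃ i, f x = y i
  · obtain ⟨i, hi⟩ := hx
    obtain rfl : x = address i := haddress_unique i x hi
    rw [hi]
    exact address_injective.extend_apply y 0 i
  · rw [hzero x (not_exists.1 hx)]
    refine extend_apply' _ _ _ ?_
    rintro ⟨i, rfl⟩
    exact hx ⟨i, haddress i⟩

lemma placements_eq_range_extend_zero (hy : Injective y) (hy0 : ∀ i, y i ≠ 0) :
    placements α y = Set.range fun e : ι ↪ α => extend e y 0 := by
  ext f
  constructor
  · exact exists_extend_zero_eq_of_mem_placements hy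
  · rintro ⟨e, rfl⟩
    exact extend_zero_mem_placements hy hy0 e

lemma finite_placements [Finite ι] [Finite α] (hy : Injective y) : (placements α y).Finite :=
  (Set.finite_range fun e : ι ↪ α => extend e y 0).subset fun _ =>
    exists_extend_zero_eq_of_mem_placements hy

lemma ncard_placements [Fintype ι] [Fintype α] (hy : Injective y) (hy0 : ∀ i, y i ≠ 0) :
    (placements α y).ncard = (Fintype.card α).descFactorial (Fintype.card ι) := by
  rw [placements_eq_range_extend_zero hy hy0, ← Nat.card_coe_set_eq,
    Nat.card_range_of_injective (embedding_extend_zero_injective hy hy0),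
    Nat.card_eq_fintype_card, Fintype.card_embedding_eq]

/-- The placements of all items `y i` except `y j`. -/
def placementsOmitting (α : Type*) (y : ι → B) (j : ι) : Set (α → B) :=
  placements α fun i : {i // i ≠ j} => y i

lemma mem_placementsOmitting_iff (hy : Injective y) {j : ι} (hj0 : y j ≠ 0) {f : α → B} :
    f ∈ placementsOmitting α y j ↔
      (∀ i, i ≠ j → ∃! x, f x = y i) ∧ (∀ x, f x ≠ y j) ∧
        ∀ x, (∀ i, f x ≠ y i) → f x = 0 := by
  simp only [placementsOmitting, placements, Set.mem_ofPred_eq, Subtype.forall]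
  refine and_congr_right fun _ => ⟨fun hzero => ⟨fun x hx => ?_, fun x hx => ?_⟩, ?_⟩
  · have hfx : f x = 0 := hzero x fun i hij hi => hij (hy (hi.symm.trans hx))
    exact hj0 (hx.symm.trans hfx)
  · exact hzero x fun i _ => hx i
  · rintro ⟨homit, hzero⟩ x hx
    refine hzero x fun i => ?_
    rcases eq_or_ne i j with rfl | hij
    · exact homit x
    · exact hx i hij

lemma pairwise_disjoint_placementsOmitting (hy : Injective y) (hy0 : ∀ i, y i ≠ 0) :
    Pairwise (Disjoint on placementsOmitting α y) := by
  intro j j' hne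
  refine Set.disjoint_left.2 fun f hf hf' => ?_
  obtain ⟨-, homit, -⟩ := (mem_placementsOmitting_iff hy (hy0 j)).1 hf
  obtain ⟨hunique, -, -⟩ := (mem_placementsOmitting_iff hy (hy0 j')).1 hf'
  obtain ⟨x, hx⟩ := (hunique j hne).exists
  exact homit x hx

lemma finite_placementsOmitting [Finite ι] [Finite α] (hy : Injective y) (j : ι) :
    (placementsOmitting α y j).Finite :=
  finite_placements (hy.comp Subtype.val_injective)

lemma ncard_placementsOmitting [Fintype ι] [Fintype α] (hy : Injective y) (hy0 : ∀ i, y i ≠ 0)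
    (j : ι) :
    (placementsOmitting α y j).ncard =
      (Fintype.card α).descFactorial (Fintype.card ι - 1) := by
  classical
  have hcard : Fintype.card {i // i ≠ j} = Fintype.card ι - 1 := Set.card_ne_eq j
  rw [← hcard]
  exact ncard_placements (hy.comp Subtype.val_injective) fun i => hy0 i

end Placements

lemma mul_descFactorial_pred (n : ℕ) {k : ℕ} (hk : k ≠ 0) :
    k * n.descFactorial (k - 1) = n.choose (k - 1) * k.factorial := by
  rw [Nat.descFactorial_eq_factorial_mul_choose, ← mul_assoc, Nat.mul_factorial_pred hk, mul_comm]

theorem V0_card_general {ι α B : Type*} [Fintype ι] [Nonempty ι] [Fintype α] [Zero B]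
    {y : ι → B} (hy : Injective y) (hy0 : ∀ i, y i ≠ 0) :
    {f : α → B |
        ∃ j,
          (∀ i, i ≠ j → ∃! x, f x = y i) ∧
          (∀ x, f x ≠ y j) ∧
          (∀ x, (∀ i, f x ≠ y i) → f x = 0)}.ncard
      = (Fintype.card α).choose (Fintype.card ι - 1) * (Fintype.card ι).factorial := by
  simp only [← mem_placementsOmitting_iff hy (hy0 _), ← Set.iUnion_ofPred, Set.ofPred_mem_eq]
  rw [Set.ncard_iUnion_of_finite (finite_placementsOmitting hy)
      (pairwise_disjoint_placementsOmitting hy hy0), finsum_eq_sum_of_fintype]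
  simp only [ncard_placementsOmitting hy hy0, Finset.sum_const, Finset.card_univ, smul_eq_mul]
  exact mul_descFactorial_pred _ Fintype.card_ne_zero

/-- The set V₀ (databases containing exactly k-1 of the k distinct nonzero
items `y i`, with all other addresses holding 0) has exactly
C(N, k-1) · k! elements. -/
theorem V0_card (N k : ℕ) (hN : 0 < N) (hk : 0 < k) (hkN : k ≤ N)
    (B : Type) [Fintype B] [DecidableEq B] [Zero B]
    (y : Fin k → B) (hy : Function.Injective y) (hy0 : ∀ i, y i ≠ 0) :
    {f : Fin N → B |
        ∃ j : Fin k,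
          (∀ i : Fin k, i ≠ j → ∃! x : Fin N, f x = y i) ∧
          (∀ x : Fin N, f x ≠ y j) ∧
          (∀ x : Fin N, (∀ i : Fin k, f x ≠ y i) → f x = 0)}.ncard
      = N.choose (k - 1) * Nat.factorial k := by
  have : Nonempty (Fin k) := Fin.pos_iff_nonempty.1 hk
  simpa only [Fintype.card_fin] using V0_card_general (α := Fin N) hy hy0
end

section
/- Every f₀ ∈ V₀ is adjacent to exactly N − k + 1 functions f₁ ∈ V₁ (i.e., the minimum degree Δ₀ of a vertex of V₀ in the bipartite adjacency graph between V₀ and V₁ equals N − k + 1). -/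
/-!
A vertex of `V₀` or `V₁` is a function restricting to a bijection from its support onto the set of
items it stores. If `f₀` stores `S` and `b ∉ S` is nonzero, then the functions that store
`insert b S` and differ from `f₀` at one address are those obtained by writing `b` at a zero of
`f₀`. Distinct zeros give distinct functions, and the zeros of `f₀` are the addresses outside its
support, which is in bijection with `S`.
-/

open Function Set

section Placement

variable {α ι B : Type*}

theorem existsUnique_ne_iff_eq_update [DecidableEq α] {f g : α → B} :
    (∃! x, f x ≠ g x) ↔ ∃ x, f x ≠ g x ∧ g = update f x (g x) := by
  simp only [ExistsUnique, eq_update_iff, true_and]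
  refine exists_congr fun x ↦ and_congr_right fun _ ↦ forall_congr' fun z ↦ ?_
  rw [ne_comm, ne_eq, not_imp_comm]

theorem injective_update_of_notMem_range [DecidableEq α] {f : α → B} {b : B} (hb : b ∉ range f) :
    Injective fun x ↦ update f x b := by
  intro x z hxz
  by_contra hne
  refine hb ⟨x, ?_⟩
  simpa only [update_self, update_of_ne hne] using (congrFun hxz x).symm

variable [Zero B] {S : Set B} {b : B} {f g : α → B}

/-- `f` stores each item of `S` at exactly one address and `0` at all others. Stated through
`Function.support`, this forces `0 ∉ S`. The vertices in `V₁` are the placements of all the target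
items, and those in `V₀` the placements of all but one of them. -/
def IsPlacement (S : Set B) (f : α → B) : Prop :=
  BijOn f (support f) S

theorem isPlacement_iff (hS : 0 ∉ S) :
    IsPlacement S f ↔ (∀ b ∈ S, ∃! x, f x = b) ∧ ∀ x, f x ∉ S → f x = 0 := by
  constructor
  · refine fun hf ↦ ⟨fun b hb ↦ ?_, fun x hx ↦ by_contra fun hx0 ↦ hx (hf.mapsTo hx0)⟩
    obtain ⟨x, hx, rfl⟩ := hf.surjOn hb
    exact ⟨x, rfl, fun z hz ↦ hf.injOn (mem_support.2 (hz ▸ hx)) hx hz⟩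
  · rintro ⟨hunique, hzero⟩
    have hmaps : MapsTo f (support f) S := fun x hx ↦ by_contra fun hxS ↦ hx (hzero x hxS)
    refine ⟨hmaps, fun x hx z _ hxz ↦ (hunique _ (hmaps hx)).unique rfl hxz.symm, fun b hb ↦ ?_⟩
    obtain ⟨x, rfl, -⟩ := hunique b hb
    exact ⟨x, fun hx0 ↦ hS (hx0 ▸ hb), rfl⟩

theorem isPlacement_range_iff {y : ι → B} (hy0 : ∀ i, y i ≠ 0) :
    IsPlacement (range y) f ↔
      (∀ i, ∃! x, f x = y i) ∧ ∀ x, (∀ i, f x ≠ y i) → f x = 0 := by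
  rw [isPlacement_iff (by simpa using hy0)]
  simp only [forall_mem_range]
  simp only [mem_range, not_exists, ne_eq, eq_comm (b := f _)]

theorem isPlacement_image_compl_singleton {y : ι → B} {j : ι} (hy0 : ∀ i, y i ≠ 0)
    (hunique : ∀ i, i ≠ j → ∃! x, f x = y i) (hj : ∀ x, f x ≠ y j)
    (hzero : ∀ x, (∀ i, f x ≠ y i) → f x = 0) : IsPlacement (y '' {j}ᶜ) f := by
  refine (isPlacement_iff ?_).2 ⟨forall_mem_image.2 hunique, fun x hx ↦ hzero x fun i hi ↦ ?_⟩
  · rintro ⟨i, -, hi⟩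
    exact hy0 i hi
  · obtain rfl | hij := eq_or_ne i j
    · exact hj x hi
    · exact hx ⟨i, hij, hi.symm⟩

namespace IsPlacement

theorem notMem_range (hf : IsPlacement S f) (hb : b ∉ S) (hb0 : b ≠ 0) : b ∉ range f := by
  rintro ⟨x, rfl⟩
  exact hb (hf.mapsTo hb0)

theorem encard_compl_support_add_encard (hf : IsPlacement S f) :
    (support f)ᶜ.encard + S.encard = ENat.card α := by
  rw [← hf.image_eq, hf.injOn.encard_image, add_comm, encard_add_encard_compl, encard_univ]

section Update

variable [DecidableEq α]

theorem update {x : α} (hf : IsPlacement S f) (hb : b ∉ S) (hb0 : b ≠ 0) (hx : f x = 0) :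
    IsPlacement (insert b S) (Function.update f x b) := by
  have heq : EqOn f (Function.update f x b) (support f) := fun z hz ↦
    (update_of_ne (by rintro rfl; exact hz hx) b f).symm
  have hins := (hf.congr heq).insert (a := x) (by rwa [update_self])
  rwa [update_self, ← support_update_of_ne_zero f x hb0] at hins

theorem apply_eq_zero_of_update {x : α} (hf : IsPlacement S f) (hb : b ∉ S)
    (hupdate : IsPlacement (insert b S) (Function.update f x b)) : f x = 0 := by
  by_contra hx
  have hxS : f x ∈ S := hf.mapsTo hx
  obtain ⟨z, -, hz⟩ := hupdate.surjOn (mem_insert_of_mem b hxS)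
  obtain rfl | hzx := eq_or_ne z x
  · rw [update_self] at hz
    exact hb (hz ▸ hxS)
  · rw [update_of_ne hzx] at hz
    exact hzx (hf.injOn (mem_support.2 (hz ▸ hx)) hx hz)

theorem adjacent_iff (hf : IsPlacement S f) (hb : b ∉ S) (hb0 : b ≠ 0) :
    (IsPlacement (insert b S) g ∧ ∃! x, f x ≠ g x) ↔
      ∃ x, f x = 0 ∧ Function.update f x b = g := by
  have hbf : b ∉ range f := hf.notMem_range hb hb0
  rw [existsUnique_ne_iff_eq_update]
  constructor
  · rintro ⟨hg, x, -, hgx⟩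
    have hbx : g x = b := by
      obtain ⟨z, -, hz⟩ := hg.surjOn (mem_insert b S)
      obtain rfl | hzx := eq_or_ne z x
      · exact hz
      · rw [hgx, update_of_ne hzx] at hz
        exact (hbf ⟨z, hz⟩).elim
    rw [hbx] at hgx
    exact ⟨x, hf.apply_eq_zero_of_update hb (hgx ▸ hg), hgx.symm⟩
  · rintro ⟨x, hx, rfl⟩
    refine ⟨hf.update hb hb0 hx, x, ?_, ?_⟩ <;> rw [update_self]
    exact fun hfx ↦ hbf ⟨x, hfx⟩

end Update

theorem encard_adjacent_add_encard (hf : IsPlacement S f) (hb : b ∉ S) (hb0 : b ≠ 0) :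
    {g | IsPlacement (insert b S) g ∧ ∃! x, f x ≠ g x}.encard + S.encard = ENat.card α := by
  classical
  have himage : {g | IsPlacement (insert b S) g ∧ ∃! x, f x ≠ g x} =
      (fun x ↦ Function.update f x b) '' (support f)ᶜ := by
    ext g
    simp only [mem_ofPred_eq, hf.adjacent_iff hb hb0, mem_image, mem_compl_iff, notMem_support]
  rw [himage, (injective_update_of_notMem_range (hf.notMem_range hb hb0)).encard_image,
    hf.encard_compl_support_add_encard]

end IsPlacement

theorem degree_V0_general {y : ι → B} (hy : Injective y) (hy0 : ∀ i, y i ≠ 0) {f₀ : α → B}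
    (hf₀ : ∃ j, (∀ i, i ≠ j → ∃! x, f₀ x = y i) ∧ (∀ x, f₀ x ≠ y j) ∧
      ∀ x, (∀ i, f₀ x ≠ y i) → f₀ x = 0) :
    {f₁ : α → B | ((∀ i, ∃! x, f₁ x = y i) ∧ ∀ x, (∀ i, f₁ x ≠ y i) → f₁ x = 0) ∧
      ∃! x, f₀ x ≠ f₁ x}.encard + ENat.card ι = ENat.card α + 1 := by
  obtain ⟨j, hunique, hj, hzero⟩ := hf₀
  have hplace : IsPlacement (y '' {j}ᶜ) f₀ :=
    isPlacement_image_compl_singleton hy0 hunique hj hzero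
  have hyj : y j ∉ y '' {j}ᶜ := by simp [hy.mem_set_image]
  have hrange : insert (y j) (y '' {j}ᶜ) = range y := by
    rw [← image_insert_eq, insert_eq, union_compl_self, image_univ]
  have hcard : ENat.card ι = (y '' {j}ᶜ).encard + 1 := by
    rw [← encard_insert_of_notMem hyj, hrange, ← image_univ, hy.encard_image, encard_univ]
  have hdegree := hplace.encard_adjacent_add_encard hyj (hy0 j)
  simp only [hrange, isPlacement_range_iff hy0] at hdegree
  rw [hcard, ← add_assoc, hdegree]

end Placement

/-- Every f₀ ∈ V₀ is adjacent (differs at exactly one address) to exactly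
N - k + 1 functions f₁ ∈ V₁. -/
theorem degree_V0 (N k : ℕ) (hN : 0 < N) (hk : 0 < k) (hkN : k ≤ N)
    (B : Type) [Fintype B] [DecidableEq B] [Zero B]
    (y : Fin k → B) (hy : Function.Injective y) (hy0 : ∀ i, y i ≠ 0)
    (f₀ : Fin N → B)
    (hf₀ : ∃ j : Fin k,
        (∀ i : Fin k, i ≠ j → ∃! x : Fin N, f₀ x = y i) ∧
        (∀ x : Fin N, f₀ x ≠ y j) ∧
        (∀ x : Fin N, (∀ i : Fin k, f₀ x ≠ y i) → f₀ x = 0)) :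
    {f₁ : Fin N → B |
        ((∀ i : Fin k, ∃! x : Fin N, f₁ x = y i) ∧
          (∀ x : Fin N, (∀ i : Fin k, f₁ x ≠ y i) → f₁ x = 0)) ∧
        (∃! x : Fin N, f₀ x ≠ f₁ x)}.ncard = N - k + 1 := by
  have hdegree := degree_V0_general hy hy0 hf₀
  rw [← (toFinite _).cast_ncard_eq, ENat.card_eq_coe_fintype_card, ENat.card_eq_coe_fintype_card,
    Fintype.card_fin, Fintype.card_fin] at hdegree
  norm_cast at hdegree
  rw [← Nat.sub_add_comm hkN]
  exact Nat.eq_sub_of_add_eq hdegree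
end

section
/- Every f₁ ∈ V₁ is adjacent to exactly k functions f₀ ∈ V₀ (i.e., the minimum degree Δ₁ of a vertex of V₁ in the bipartite adjacency graph between V₀ and V₁ equals k). -/
/-!
The neighbours of `f₁` in `V₀` are exactly the functions obtained from `f₁` by erasing (setting to
`0`) one address of its support: the missing item `y j` forces the change to happen at the address
of `y j`, and no other item can be written there without occurring twice. Distinct addresses of the
support give distinct neighbours, and the support is in bijection with the items.
-/

open Function Set

section Update

variable {X B : Type*} {f g : X → B} {a x : X} {b c : B}

theorem eq_of_existsUnique_ne (hfg : ∃! x, g x ≠ f x) (ha : g a ≠ f a) (hxa : x ≠ a) :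
    g x = f x := by
  by_contra hx
  exact hxa (hfg.unique hx ha)

variable [DecidableEq X]

theorem existsUnique_update_ne (hb : b ≠ f a) : ∃! x, update f a b x ≠ f x := by
  refine ⟨a, by simpa using hb, fun x hx ↦ ?_⟩
  by_contra hxa
  exact hx (update_of_ne hxa b f)

variable [Zero B]

theorem update_zero_eq_iff (hc : c ≠ 0) : update f a 0 x = c ↔ x ≠ a ∧ f x = c := by
  rcases eq_or_ne x a with rfl | hxa
  · simp [hc.symm]
  · simp [hxa]

theorem injOn_update_zero_support : InjOn (fun a ↦ update f a 0) (support f) := by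
  intro a ha a' _ h
  by_contra haa'
  have hfa : 0 = f a := by simpa [update_of_ne haa'] using congrFun h a
  exact ha hfa.symm

end Update

/-- The function `f` stores exactly the items `y i` with `i ∈ S`: each of them occurs at exactly one
address, no other `y i` occurs, and the remaining addresses hold `0`. The vertices in `V₁` are the
case `S = univ`, and those in `V₀` are the cases `S = univ \ {j}`. -/
structure StoresExactly {X ι B : Type*} [Zero B] (y : ι → B) (S : Set ι) (f : X → B) : Prop where
  existsUnique_eq : ∀ i ∈ S, ∃! x, f x = y i
  ne : ∀ i ∉ S, ∀ x, f x ≠ y i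
  eq_zero : ∀ x, (∀ i, f x ≠ y i) → f x = 0

section StoresExactly

variable {X ι B : Type*} [Zero B] {y : ι → B} {S : Set ι} {f g : X → B} {a : X} {j : ι}

theorem storesExactly_univ_iff :
    StoresExactly y univ f ↔
      (∀ i, ∃! x, f x = y i) ∧ ∀ x, (∀ i, f x ≠ y i) → f x = 0 :=
  ⟨fun h ↦ ⟨fun i ↦ h.existsUnique_eq i (mem_univ i), h.eq_zero⟩,
    fun h ↦ ⟨fun i _ ↦ h.1 i, fun i hi ↦ absurd (mem_univ i) hi, h.2⟩⟩

theorem storesExactly_univ_diff_singleton_iff :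
    StoresExactly y (univ \ {j}) f ↔
      (∀ i, i ≠ j → ∃! x, f x = y i) ∧ (∀ x, f x ≠ y j) ∧
        ∀ x, (∀ i, f x ≠ y i) → f x = 0 :=
  ⟨fun h ↦ ⟨fun i hi ↦ h.existsUnique_eq i ⟨mem_univ i, hi⟩, h.ne j (by simp), h.eq_zero⟩,
    fun h ↦ ⟨fun i hi ↦ h.1 i hi.2, fun i hi ↦ by simp_all, h.2.2⟩⟩

namespace StoresExactly

theorem exists_eq_of_mem_support (hf : StoresExactly y S f) (ha : a ∈ support f) :
    ∃ j ∈ S, f a = y j := by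
  obtain ⟨j, hj⟩ : ∃ j, f a = y j := by
    by_contra! h
    exact ha (hf.eq_zero a h)
  exact ⟨j, by_contra fun hjS ↦ hf.ne j hjS a hj, hj⟩

theorem bijOn_support (hf : StoresExactly y S f) (hy0 : ∀ i ∈ S, y i ≠ 0) :
    BijOn f (support f) (y '' S) := by
  refine ⟨fun a ha ↦ ?_, fun a ha b _ hab ↦ ?_, ?_⟩
  · obtain ⟨j, hjS, hj⟩ := hf.exists_eq_of_mem_support ha
    exact ⟨j, hjS, hj.symm⟩
  · obtain ⟨j, hjS, hj⟩ := hf.exists_eq_of_mem_support ha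
    exact (hf.existsUnique_eq j hjS).unique hj (hab.symm.trans hj)
  · rintro _ ⟨j, hjS, rfl⟩
    obtain ⟨a, ha⟩ := (hf.existsUnique_eq j hjS).exists
    exact ⟨a, by simpa [ha] using hy0 j hjS, ha⟩

theorem encard_support (hf : StoresExactly y S f) (hy : InjOn y S) (hy0 : ∀ i ∈ S, y i ≠ 0) :
    (support f).encard = S.encard := by
  have hbij := hf.bijOn_support hy0
  rw [← hbij.injOn.encard_image, hbij.image_eq, hy.encard_image]

variable [DecidableEq X]

theorem update_zero (hf : StoresExactly y S f) (hy : InjOn y S) (hy0 : ∀ i, y i ≠ 0)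
    (hj : j ∈ S) (ha : f a = y j) : StoresExactly y (S \ {j}) (update f a 0) where
  existsUnique_eq := by
    rintro i ⟨hiS, hij⟩
    obtain ⟨x, hx, hx_unique⟩ := hf.existsUnique_eq i hiS
    have hxa : x ≠ a := by
      rintro rfl
      exact hij (hy hiS hj (hx.symm.trans ha))
    exact ⟨x, (update_zero_eq_iff (hy0 i)).2 ⟨hxa, hx⟩,
      fun z hz ↦ hx_unique z ((update_zero_eq_iff (hy0 i)).1 hz).2⟩
  ne := by
    intro i hi x hx
    obtain ⟨hxa, hfx⟩ := (update_zero_eq_iff (hy0 i)).1 hx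
    have hiS : i ∈ S := by_contra fun hiS ↦ hf.ne i hiS x hfx
    obtain rfl : i = j := by_contra fun hij ↦ hi ⟨hiS, hij⟩
    exact hxa ((hf.existsUnique_eq i hiS).unique hfx ha)
  eq_zero := by
    intro x hx
    rcases eq_or_ne x a with rfl | hxa
    · exact update_self ..
    · rw [update_of_ne hxa] at hx ⊢
      exact hf.eq_zero x hx

theorem eq_update_zero (hf : StoresExactly y S f) (hg : StoresExactly y (S \ {j}) g)
    (hy : InjOn y S) (hj : j ∈ S) (ha : f a = y j) (hfg : ∃! x, g x ≠ f x) :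
    g = update f a 0 := by
  have hga_ne : g a ≠ f a := ha ▸ hg.ne j (by simp) a
  have hg_eq : ∀ x ≠ a, g x = f x := fun x ↦ eq_of_existsUnique_ne hfg hga_ne
  have hga : g a = 0 := hg.eq_zero a fun i hi ↦ by
    have hiS : i ∈ S \ {j} := by_contra fun hiS ↦ hg.ne i hiS a hi
    obtain ⟨x, hx⟩ := (hf.existsUnique_eq i hiS.1).exists
    have hxa : x ≠ a := by
      rintro rfl
      exact hiS.2 (hy hiS.1 hj (hx.symm.trans ha))
    exact hxa ((hg.existsUnique_eq i hiS).unique ((hg_eq x hxa).trans hx) hi)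
  exact eq_update_iff.2 ⟨hga, hg_eq⟩

theorem setOf_neighbor_eq_image (hf : StoresExactly y S f) (hy : InjOn y S)
    (hy0 : ∀ i, y i ≠ 0) :
    {g | (∃ j ∈ S, StoresExactly y (S \ {j}) g) ∧ ∃! x, g x ≠ f x} =
      (fun a ↦ update f a 0) '' support f := by
  ext g
  constructor
  · rintro ⟨⟨j, hjS, hg⟩, hfg⟩
    obtain ⟨a, ha⟩ := (hf.existsUnique_eq j hjS).exists
    exact ⟨a, by simpa [ha] using hy0 j, (hf.eq_update_zero hg hy hjS ha hfg).symm⟩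
  · rintro ⟨a, ha, rfl⟩
    obtain ⟨j, hjS, hj⟩ := hf.exists_eq_of_mem_support ha
    exact ⟨⟨j, hjS, hf.update_zero hy hy0 hjS hj⟩, existsUnique_update_ne (Ne.symm ha)⟩

end StoresExactly

theorem degree_V1_general (hy : InjOn y S) (hy0 : ∀ i, y i ≠ 0) (hf : StoresExactly y S f) :
    {g | (∃ j ∈ S, StoresExactly y (S \ {j}) g) ∧ ∃! x, g x ≠ f x}.encard = S.encard := by
  classical
  rw [hf.setOf_neighbor_eq_image hy hy0, injOn_update_zero_support.encard_image,
    hf.encard_support hy fun i _ ↦ hy0 i]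

end StoresExactly

/-- Every f₁ ∈ V₁ is adjacent (differs at exactly one address) to exactly
k functions f₀ ∈ V₀. -/
theorem degree_V1 (N k : ℕ) (hN : 0 < N) (hk : 0 < k) (hkN : k ≤ N)
    (B : Type) [Fintype B] [DecidableEq B] [Zero B]
    (y : Fin k → B) (hy : Function.Injective y) (hy0 : ∀ i, y i ≠ 0)
    (f₁ : Fin N → B)
    (hf₁ : (∀ i : Fin k, ∃! x : Fin N, f₁ x = y i) ∧
        (∀ x : Fin N, (∀ i : Fin k, f₁ x ≠ y i) → f₁ x = 0)) :
    {f₀ : Fin N → B |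
        (∃ j : Fin k,
          (∀ i : Fin k, i ≠ j → ∃! x : Fin N, f₀ x = y i) ∧
          (∀ x : Fin N, f₀ x ≠ y j) ∧
          (∀ x : Fin N, (∀ i : Fin k, f₀ x ≠ y i) → f₀ x = 0)) ∧
        (∃! x : Fin N, f₀ x ≠ f₁ x)}.ncard = k := by
  have hdeg := degree_V1_general hy.injOn hy0 (storesExactly_univ_iff.2 hf₁)
  simpa [storesExactly_univ_diff_singleton_iff, ncard_def] using congrArg ENat.toNat hdeg
end

section
/- For every f₀ ∈ V₀, every positive integer d, and every fixed d-tuple of addresses (x₁, …, x_d) ∈ (Fin N)^d, the number of functions f₁ ∈ V₁ that are adjacent to f₀ and satisfy f₀(xᵢ) ≠ f₁(xᵢ) for at least one index i is at most d. (This is the quantity ℓ₀ in the adversary-method lower bound: an edge (f₀^{⊗d}, f₁^{⊗d}) is labeled by an address (x₁,…,x_d) of the d-fold database exactly when f₀ and f₁ differ at some coordinate xᵢ.) -/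
/-!
If `f₀` misses the item `b` and `f₁` attains it, then `f₀` and `f₁` differ wherever `f₁` takes the
value `b`. When they differ at a single address `a`, this forces `f₁ a = b`, so `f₁` is `f₀` with
its value at `a` overwritten by `b`. Hence each queried address accounts for at most one `f₁`.
-/

open Function Set

section UniqueDifference

variable {α β ι : Type*} {f g : α → β} {a : α} {b : β}

theorem eq_update_of_existsUnique_ne [DecidableEq α] (hfg : ∃! c, f c ≠ g c) (ha : f a ≠ g a) :
    g = update f a (g a) :=
  eq_update_iff.2 ⟨rfl, fun _ hca => by_contra fun hne => hca (hfg.unique (Ne.symm hne) ha)⟩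

theorem apply_eq_of_existsUnique_ne (hfg : ∃! c, f c ≠ g c) (ha : f a ≠ g a)
    (hf : b ∉ range f) (hg : b ∈ range g) : g a = b := by
  obtain ⟨c, rfl⟩ := hg
  have hc : f c ≠ g c := fun h => hf ⟨c, h⟩
  rw [hfg.unique ha hc]

theorem ell0_bound_general {V₁ : (α → β) → Prop} (hf : b ∉ range f)
    (hV₁ : ∀ g, V₁ g → b ∈ range g) (x : ι → α) :
    {g | V₁ g ∧ (∃! a, f a ≠ g a) ∧ ∃ i, f (x i) ≠ g (x i)}.encard ≤ ENat.card ι := by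
  classical
  have hsub : {g | V₁ g ∧ (∃! a, f a ≠ g a) ∧ ∃ i, f (x i) ≠ g (x i)} ⊆
      range fun i => update f (x i) b := by
    rintro g ⟨hg, hfg, i, hi⟩
    have hgb : g (x i) = b := apply_eq_of_existsUnique_ne hfg hi hf (hV₁ g hg)
    exact ⟨i, hgb ▸ (eq_update_of_existsUnique_ne hfg hi).symm⟩
  calc _ ≤ (range fun i => update f (x i) b).encard := encard_le_encard hsub
    _ ≤ ENat.card ι := by
      rw [← image_univ, ← encard_univ]
      exact encard_image_le _ _

end UniqueDifference

/-- ℓ₀ bound: for every f₀ ∈ V₀ and every fixed d-tuple of addresses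
(x₁, …, x_d), at most d functions f₁ ∈ V₁ are adjacent to f₀ and differ
from f₀ at some coordinate xᵢ. -/
theorem ell0_bound (N k : ℕ) (hN : 0 < N) (hk : 0 < k) (hkN : k ≤ N)
    (B : Type) [Fintype B] [DecidableEq B] [Zero B]
    (y : Fin k → B) (hy : Function.Injective y) (hy0 : ∀ i, y i ≠ 0)
    (f₀ : Fin N → B)
    (hf₀ : ∃ j : Fin k,
        (∀ i : Fin k, i ≠ j → ∃! x : Fin N, f₀ x = y i) ∧
        (∀ x : Fin N, f₀ x ≠ y j) ∧
        (∀ x : Fin N, (∀ i : Fin k, f₀ x ≠ y i) → f₀ x = 0))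
    (d : ℕ) (hd : 0 < d) (x : Fin d → Fin N) :
    {f₁ : Fin N → B |
        ((∀ i : Fin k, ∃! a : Fin N, f₁ a = y i) ∧
          (∀ a : Fin N, (∀ i : Fin k, f₁ a ≠ y i) → f₁ a = 0)) ∧
        (∃! a : Fin N, f₀ a ≠ f₁ a) ∧
        (∃ i : Fin d, f₀ (x i) ≠ f₁ (x i))}.ncard ≤ d := by
  obtain ⟨j, -, hj, -⟩ := hf₀
  exact ENat.toNat_le_of_le_natCast <| (ell0_bound_general (b := y j) (fun ⟨a, ha⟩ => hj a ha)
    (fun _ hf₁ => (hf₁.1 j).exists) x).trans_eq (by simp)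
end

section
/- For every f₁ ∈ V₁, every positive integer d, and every fixed d-tuple of addresses (x₁, …, x_d) ∈ (Fin N)^d, the number of functions f₀ ∈ V₀ that are adjacent to f₁ and satisfy f₀(xᵢ) ≠ f₁(xᵢ) for at least one index i is at most min{d, k}. (This is the quantity ℓ₁ in the adversary-method lower bound: an edge (f₀^{⊗d}, f₁^{⊗d}) is labeled by an address (x₁,…,x_d) of the d-fold database exactly when f₀ and f₁ differ at some coordinate xᵢ.) -/
/-!
If `f₀` misses the item `y j`, it differs from `f₁` at the address of `y j` in `f₁`, so adjacency
makes this the only difference. The value of `f₀` there is not a target, because every other target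
already sits at its address in `f₁`; hence it is `0`. Thus `f₀` is `f₁` with one address `a` zeroed
out, where `a` is both an entry of `x` and the address of some `y j`, and counting the former gives
`d`, the latter `k`.
-/

open Function

section Databases

variable {α B ι δ : Type*}

/-- Adjacency of databases: `f` and `g` differ at exactly one address. -/
def DifferAtOne (f g : α → B) : Prop :=
  ∃! a, f a ≠ g a

/-- The database `f` lacks the target `y j`, contains each other target exactly once, and is `0` at
all remaining addresses. The set `V₀` consists of the `f` for which this holds for some `j`. -/
def MissesOnly [Zero B] (y : ι → B) (j : ι) (f : α → B) : Prop :=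
  (∀ i, i ≠ j → ∃! a, f a = y i) ∧ (∀ a, f a ≠ y j) ∧ ∀ a, (∀ i, f a ≠ y i) → f a = 0

theorem DifferAtOne.eq_update [DecidableEq α] {f g : α → B} (h : DifferAtOne f g) {a : α}
    (ha : f a ≠ g a) : f = update g a (f a) :=
  eq_update_iff.2 ⟨rfl, fun _ hb => not_not.1 fun hne => hb (h.unique hne ha)⟩

theorem MissesOnly.target_ne [Zero B] {y : ι → B} {j : ι} {f : α → B} (h : MissesOnly y j f)
    {i : ι} (hij : i ≠ j) : y i ≠ y j := by
  obtain ⟨a, ha, -⟩ := h.1 i hij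
  exact ha ▸ h.2.1 a

section Adjacent

variable [Zero B] {y : ι → B} {j : ι} {f₀ f₁ : α → B}

theorem MissesOnly.apply_eq_zero (h₀ : MissesOnly y j f₀) (hadj : DifferAtOne f₀ f₁)
    (hf₁ : Set.range y ⊆ Set.range f₁) {a : α} (ha : f₁ a = y j) : f₀ a = 0 := by
  have hne : f₀ a ≠ f₁ a := ha ▸ h₀.2.1 a
  refine h₀.2.2 a fun i hi => ?_
  have hij : i ≠ j := by
    rintro rfl
    exact h₀.2.1 a hi
  obtain ⟨b, hb⟩ := hf₁ ⟨i, rfl⟩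
  have hba : b ≠ a := by
    rintro rfl
    exact h₀.target_ne hij (hb.symm.trans ha)
  have hb₀ : f₀ b = y i := by
    by_contra hc
    exact hba (hadj.unique (hb ▸ hc) hne)
  exact hba ((h₀.1 i hij).unique hb₀ hi)

theorem MissesOnly.eq_update_zero [DecidableEq α] (h₀ : MissesOnly y j f₀)
    (hadj : DifferAtOne f₀ f₁) (hf₁ : Set.range y ⊆ Set.range f₁) {a : α} (ha : f₁ a = y j) :
    f₀ = update f₁ a 0 := by
  rw [← h₀.apply_eq_zero hadj hf₁ ha]
  exact hadj.eq_update (ha ▸ h₀.2.1 a)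

theorem MissesOnly.apply_eq_target (h₀ : MissesOnly y j f₀) (hadj : DifferAtOne f₀ f₁)
    (hf₁ : Set.range y ⊆ Set.range f₁) {a : α} (ha : f₀ a ≠ f₁ a) : f₁ a = y j := by
  obtain ⟨b, hb⟩ := hf₁ ⟨j, rfl⟩
  have hab : a = b := hadj.unique ha (hb ▸ h₀.2.1 b)
  rw [hab, hb]

end Adjacent

theorem encard_range_le (f : α → B) : (Set.range f).encard ≤ ENat.card α := by
  rw [← Set.image_univ, ← Set.encard_univ]
  exact Set.encard_image_le f Set.univ

theorem ell1_bound_general [Zero B] {y : ι → B} {f₁ : α → B}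
    (hf₁ : Set.range y ⊆ Set.range f₁) (x : δ → α) :
    {f₀ : α → B | (∃ j, MissesOnly y j f₀) ∧ DifferAtOne f₀ f₁ ∧
      ∃ i, f₀ (x i) ≠ f₁ (x i)}.encard ≤ min (ENat.card δ) (ENat.card ι) := by
  classical
  refine le_min ?_ ?_
  · refine le_trans (Set.encard_le_encard ?_) (encard_range_le fun i => update f₁ (x i) 0)
    rintro f₀ ⟨⟨j, h₀⟩, hadj, i, hi⟩
    exact ⟨i, (h₀.eq_update_zero hadj hf₁ (h₀.apply_eq_target hadj hf₁ hi)).symm⟩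
  · choose address h_address using fun j => hf₁ ⟨j, rfl⟩
    refine le_trans (Set.encard_le_encard ?_) (encard_range_le fun j => update f₁ (address j) 0)
    rintro f₀ ⟨⟨j, h₀⟩, hadj, -⟩
    exact ⟨j, (h₀.eq_update_zero hadj hf₁ (h_address j)).symm⟩

end Databases

/-- ℓ₁ bound: for every f₁ ∈ V₁ and every fixed d-tuple of addresses
(x₁, …, x_d), at most min {d, k} functions f₀ ∈ V₀ are adjacent to f₁ and
differ from f₁ at some coordinate xᵢ. -/
theorem ell1_bound (N k : ℕ) (hN : 0 < N) (hk : 0 < k) (hkN : k ≤ N)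
    (B : Type) [Fintype B] [DecidableEq B] [Zero B]
    (y : Fin k → B) (hy : Function.Injective y) (hy0 : ∀ i, y i ≠ 0)
    (f₁ : Fin N → B)
    (hf₁ : (∀ i : Fin k, ∃! a : Fin N, f₁ a = y i) ∧
        (∀ a : Fin N, (∀ i : Fin k, f₁ a ≠ y i) → f₁ a = 0))
    (d : ℕ) (hd : 0 < d) (x : Fin d → Fin N) :
    {f₀ : Fin N → B |
        (∃ j : Fin k,
          (∀ i : Fin k, i ≠ j → ∃! a : Fin N, f₀ a = y i) ∧
          (∀ a : Fin N, f₀ a ≠ y j) ∧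
          (∀ a : Fin N, (∀ i : Fin k, f₀ a ≠ y i) → f₀ a = 0)) ∧
        (∃! a : Fin N, f₀ a ≠ f₁ a) ∧
        (∃ i : Fin d, f₀ (x i) ≠ f₁ (x i))}.ncard ≤ min d k := by
  have targets_subset : Set.range y ⊆ Set.range f₁ :=
    Set.range_subset_iff.2 fun i => (hf₁.1 i).exists
  exact ENat.toNat_le_of_le_natCast
    ((ell1_bound_general targets_subset x).trans_eq (by simp [Nat.mono_cast.map_min]))
end

section
/- There exists a constant d₀ such that for all integers d ≥ d₀ and all integers k with d < k ≤ d · log₂ d, setting t = ⌈5 k log₂ d / d⌉, one has C(k, t) · (1/d)^t ≤ 1/d³, where C(k, t) is the binomial coefficient (equal to 0 when t > k). -/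
/-!
From `C(k, t) ≤ k ^ t / t!` and `t ^ t / t! ≤ exp t` one gets `C(k, t) ≤ (e k / t) ^ t`. For
`t ≥ 5 k log₂ d / d` the base of `C(k, t) / d ^ t ≤ (e k / (d t)) ^ t` is at most
`e / (5 log₂ d) ≤ 1 / 2`, while `k ≥ d` gives `t ≥ 3 log₂ d`, that is `2 ^ t ≥ d ^ 3`.
-/

open Real

theorem choose_le_exp_one_mul_div_pow (k t : ℕ) :
    (k.choose t : ℝ) ≤ (exp 1 * k / t) ^ t := by
  rcases t.eq_zero_or_pos with rfl | ht
  · simp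
  have pow_div_exp_le_factorial : (t : ℝ) ^ t / exp 1 ^ t ≤ t.factorial := by
    rw [exp_one_pow, div_le_iff₀ (exp_pos _), ← div_le_iff₀' (by positivity)]
    exact pow_div_factorial_le_exp _ t.cast_nonneg t
  calc (k.choose t : ℝ)
      ≤ (k : ℝ) ^ t / t.factorial := Nat.choose_le_pow_div t k
    _ ≤ (k : ℝ) ^ t / ((t : ℝ) ^ t / exp 1 ^ t) := by gcongr
    _ = (exp 1 * k / t) ^ t := by rw [div_pow, mul_pow]; field_simp

theorem choose_mul_pow_le_pow {p c : ℝ} {k t : ℕ} (hp : 0 ≤ p)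
    (h : exp 1 * (k * p) ≤ c * t) : k.choose t * p ^ t ≤ c ^ t := by
  rcases t.eq_zero_or_pos with rfl | ht
  · simp
  have base_le : exp 1 * (k * p) / t ≤ c := by rwa [div_le_iff₀ (by positivity)]
  calc k.choose t * p ^ t
      ≤ (exp 1 * k / t) ^ t * p ^ t := by gcongr; exact choose_le_exp_one_mul_div_pow k t
    _ = (exp 1 * (k * p) / t) ^ t := by rw [← mul_pow]; ring
    _ ≤ c ^ t := by gcongr

theorem pow_le_pow_of_mul_logb_le {b x : ℝ} {n t : ℕ} (hb : 1 < b) (hx : 0 < x)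
    (h : n * logb b x ≤ t) : x ^ n ≤ b ^ t := by
  rwa [← logb_pow, logb_le_iff_le_rpow hb (by positivity), rpow_natCast] at h

theorem three_halves_le_logb_two {x : ℝ} (hx : 3 ≤ x) : 3 / 2 ≤ logb 2 x := by
  have two_pow_three_le : (2 : ℝ) ^ (3 : ℝ) ≤ x ^ 2 := by norm_num; nlinarith
  rw [← le_logb_iff_rpow_le (by norm_num) (by positivity), logb_pow] at two_pow_three_le
  push_cast at two_pow_three_le
  linarith

theorem choose_bound_medium_k_general {d : ℝ} {k t : ℕ} (hd : 3 ≤ d) (hdk : d ≤ k)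
    (ht : 5 * k * logb 2 d / d ≤ t) : k.choose t * (1 / d) ^ t ≤ 1 / d ^ 3 := by
  have hd_pos : 0 < d := by linarith
  have hlog : 3 / 2 ≤ logb 2 d := three_halves_le_logb_two hd
  have hratio : 1 ≤ k * (1 / d) := by rwa [mul_one_div, one_le_div hd_pos]
  have le_t : 5 * logb 2 d * (k * (1 / d)) ≤ t := by convert ht using 1; ring
  have exp_one_mul_le : exp 1 * (k * (1 / d)) ≤ 1 / 2 * t :=
    calc exp 1 * (k * (1 / d))
        ≤ 5 / 2 * logb 2 d * (k * (1 / d)) := by gcongr; linarith [exp_one_lt_three]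
      _ ≤ 1 / 2 * t := by linarith
  have three_mul_logb_le : (3 : ℕ) * logb 2 d ≤ t :=
    calc (3 : ℕ) * logb 2 d
        ≤ 5 * logb 2 d * 1 := by push_cast; linarith
      _ ≤ 5 * logb 2 d * (k * (1 / d)) := by gcongr
      _ ≤ t := le_t
  calc k.choose t * (1 / d) ^ t
      ≤ (1 / 2) ^ t := choose_mul_pow_le_pow (by positivity) exp_one_mul_le
    _ = 1 / 2 ^ t := one_div_pow 2 t
    _ ≤ 1 / d ^ 3 := by
      gcongr
      exact pow_le_pow_of_mul_logb_le one_lt_two hd_pos three_mul_logb_le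

/-- There is a constant d₀ such that for all d ≥ d₀ and all integers k with
d < k ≤ d·log₂ d, with t = ⌈5 k log₂ d / d⌉ one has
C(k, t) · (1/d)^t ≤ 1/d³. -/
theorem choose_bound_medium_k :
    ∃ d₀ : ℕ, ∀ d k : ℕ, d₀ ≤ d → d < k → (k : ℝ) ≤ (d : ℝ) * Real.logb 2 d →
      (k.choose ⌈(5 : ℝ) * k * Real.logb 2 d / d⌉₊ : ℝ) *
          (1 / d) ^ ⌈(5 : ℝ) * k * Real.logb 2 d / d⌉₊
        ≤ 1 / (d : ℝ) ^ 3 :=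
  ⟨3, fun _ _ hd hdk _ => choose_bound_medium_k_general (mod_cast hd) (mod_cast hdk.le)
    (Nat.le_ceil _)⟩
end
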